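/- arXiv:1604.01616 — 5 statements merged into one kernel-verified Lean document; each statement's English description precedes it below -/
import Mathlib

section
/- Let X be a compact Hausdorff topological space and A, B ⊆ X. Then B is a strong neighbourhood of A if and only if A is contained in the interior of B. -/
/-! In a compact Hausdorff space every ultrafilter `U` converges to exactly one point, so its set of
cluster points is a singleton `{x}` with `U ≤ 𝓝 x`. Hence `B` is a strong neighbourhood of `A` iff,
for each `x ∈ A`, `B` belongs to every ultrafilter finer than `𝓝 x`. Since a filter is the
intersection of the ultrafilters finer than it (`Filter.mem_iff_ultrafilter`), this says that
`B ∈ 𝓝 x` for every `x ∈ A`, i.e. `A ⊆ interior B`. -/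

open Filter Topology

/-- `B` is a strong neighbourhood of `A` if `B` belongs to every ultrafilter on `X`
all of whose cluster points lie in `A`. -/
def IsStrongNbhd {X : Type*} [TopologicalSpace X] (A B : Set X) : Prop :=
  ∀ U : Ultrafilter X, {x : X | ClusterPt x (U : Filter X)} ⊆ A → B ∈ U

theorem stmt_8 {X : Type*} [TopologicalSpace X] [CompactSpace X] [T2Space X]
    (A B : Set X) : IsStrongNbhd A B ↔ A ⊆ interior B := by
  constructor
  · intro h x hx
    rw [mem_interior_iff_mem_nhds, mem_iff_ultrafilter]
    intro U hU
    refine h U fun y hy => ?_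
    -- Limits are unique in a Hausdorff space, so `x` is the only cluster point of `U`.
    have hyx : y = x := tendsto_nhds_unique (f := id) (Ultrafilter.clusterPt_iff.mp hy) hU
    exact hyx ▸ hx
  · intro h U hU
    obtain ⟨x, hx⟩ : ∃ x, ClusterPt x (U : Filter X) := exists_clusterPt_of_compactSpace _
    exact Ultrafilter.clusterPt_iff.mp hx (mem_interior_iff_mem_nhds.mp (h (hU hx)))
end

section
/- Let X be a topological space, A ⊆ X and x ∈ X. Then x belongs to every strong neighbourhood of A if and only if the closure of {x} is contained in A. -/
/-! The cluster points of the principal ultrafilter at `x` form `closure {x}`. Hence, if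
`closure {x} ⊆ A`, testing a strong neighbourhood of `A` on that ultrafilter shows that it contains
`x`. Conversely, if `closure {x}` is not contained in `A`, then `{x}ᶜ` is a strong neighbourhood
of `A` missing `x`, because the only ultrafilter not containing `{x}ᶜ` is the principal one at
`x`. -/

open Filter Topology

theorem setOf_clusterPt_pure {X : Type*} [TopologicalSpace X] (x : X) :
    {y : X | ClusterPt y ((pure x : Ultrafilter X) : Filter X)} = closure {x} := by
  ext y
  rw [mem_closure_iff_clusterPt, principal_singleton, Set.mem_ofPred_eq, Ultrafilter.coe_pure]

theorem stmt_9 {X : Type*} [TopologicalSpace X] (A : Set X) (x : X) :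
    (∀ B : Set X, IsStrongNbhd A B → x ∈ B) ↔ closure {x} ⊆ A := by
  constructor
  · intro h
    by_contra hA
    refine h {x}ᶜ (fun U hU => ?_) rfl
    by_contra hx
    have hxU : {x} ∈ U := Ultrafilter.compl_notMem_iff.mp hx
    have hUx : U = pure x :=
      Ultrafilter.coe_le_coe.mp (le_pure_iff.mpr hxU)
    rw [hUx, setOf_clusterPt_pure] at hU
    exact hA hU
  · intro hA B hB
    exact Ultrafilter.mem_pure.mp (hB (pure x) ((setOf_clusterPt_pure x).trans_subset hA))
end

section
/- For every N ∈ ℕ and every ε ∈ (0,1) there exists N' ∈ ℕ such that the following holds: for every real normed space X and every linear subspace Y of the continuous dual X* with dim Y ≤ N, there exists a linear subspace Z ⊆ X with dim Z ≤ N' such that (1−ε)·‖y‖_{X*} ≤ ‖y∘ι_Z‖_{Z*} ≤ ‖y‖_{X*} for every y ∈ Y, where ι_Z : Z → X is the inclusion map. In particular, Y is (1−ε)^{-1}-isomorphic to a subspace of the dual of the finite-dimensional space Z. -/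
/-!
A `δ`-net of the unit sphere of a normed space of dimension at most `N` can be chosen with a
number of points bounded in terms of `N` and `δ` only: a maximal `δ`-separated subset of the
sphere is a net, and comparing Haar volumes of the disjoint balls of radius `δ / 2` around its
points with the ball of radius `1 + δ / 2` bounds its size by `((2 + δ) / δ) ^ N`
(`card_le_of_separated_sphere`, `exists_sphere_net`).

Apply this to `Y` with `δ = ε / 2`, and choose for each functional `f` in the net a vector `x f`
in the unit ball of `X` with `1 - ε / 2 < |f (x f)|`. Let `Z` be the span of these vectors. A unit
vector `y` of `Y` is within `ε / 2` of some `f` in the net, so `|y (x f)| ≥ 1 - ε`, and hence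
the restriction of `y` to `Z` has norm at least `1 - ε`. The general case follows by scaling.
-/

open MeasureTheory Metric Module in
open scoped Function ENNReal in
/-- Volume bound: the balls of radius `δ / 2` around `δ`-separated points of the unit sphere are
disjoint and lie in the ball of radius `1 + δ / 2`. -/
theorem card_le_of_separated_sphere {E : Type*} [NormedAddCommGroup E] [NormedSpace ℝ E]
    [FiniteDimensional ℝ E] {δ : ℝ} (hδ : 0 < δ) (s : Finset E) (hs : ∀ c ∈ s, ‖c‖ = 1)
    (h : ∀ c ∈ s, ∀ d ∈ s, c ≠ d → δ ≤ ‖c - d‖) :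
    (s.card : ℝ) ≤ ((2 + δ) / δ) ^ finrank ℝ E := by
  borelize E
  let μ : Measure E := Measure.addHaar
  have δpos : 0 < δ / 2 := by positivity
  have ρpos : 0 < 1 + δ / 2 := by positivity
  set A := ⋃ c ∈ s, ball (c : E) (δ / 2) with hA
  have D : Set.Pairwise (s : Set E) (Disjoint on fun c => ball (c : E) (δ / 2)) := by
    rintro c hc d hd hcd
    apply ball_disjoint_ball
    rw [dist_eq_norm]
    linarith [h c hc d hd hcd]
  have A_subset : A ⊆ ball (0 : E) (1 + δ / 2) := by
    refine Set.iUnion₂_subset fun x hx => ball_subset_ball' ?_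
    rw [dist_zero_right, hs x hx, add_comm]
  have I : (s.card : ℝ≥0∞) * ENNReal.ofReal ((δ / 2) ^ finrank ℝ E) * μ (ball 0 1) ≤
      ENNReal.ofReal ((1 + δ / 2) ^ finrank ℝ E) * μ (ball 0 1) :=
    calc
      _ = μ A := by
        rw [hA, measure_biUnion_finset D fun c _ => measurableSet_ball]
        simp only [μ.addHaar_ball_of_pos _ δpos, Finset.sum_const, nsmul_eq_mul, mul_assoc]
      _ ≤ μ (ball (0 : E) (1 + δ / 2)) := measure_mono A_subset
      _ = _ := by simp only [μ.addHaar_ball_of_pos _ ρpos]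
  have J := (ENNReal.mul_le_mul_iff_left
    (measure_ball_pos μ (0 : E) zero_lt_one).ne' measure_ball_lt_top.ne).1 I
  have K := ENNReal.toReal_le_of_le_ofReal (pow_nonneg ρpos.le _) J
  rw [ENNReal.toReal_mul, ENNReal.toReal_natCast, ENNReal.toReal_ofReal (by positivity),
    ← le_div_iff₀ (by positivity), ← div_pow] at K
  rwa [show (2 + δ) / δ = (1 + δ / 2) / (δ / 2) by field_simp]

/-- The unit sphere has a `δ`-net whose size is bounded in terms of `δ` and the dimension. -/
theorem exists_sphere_net {E : Type*} [NormedAddCommGroup E] [NormedSpace ℝ E]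
    {δ : ℝ} (hδ : 0 < δ) {N : ℕ} (hN : Module.rank ℝ E ≤ (N : Cardinal)) :
    ∃ s : Finset E, s.card ≤ ⌊((2 + δ) / δ) ^ N⌋₊ ∧ (∀ c ∈ s, ‖c‖ = 1) ∧
      ∀ y : E, ‖y‖ = 1 → ∃ c ∈ s, ‖y - c‖ < δ := by
  classical
  have : FiniteDimensional ℝ E :=
    Module.rank_lt_aleph0_iff.1 (hN.trans_lt Cardinal.natCast_lt_aleph0)
  have hcard (s : Finset E) (hs : ∀ c ∈ s, ‖c‖ = 1)
      (h : ∀ c ∈ s, ∀ d ∈ s, c ≠ d → δ ≤ ‖c - d‖) : s.card ≤ ⌊((2 + δ) / δ) ^ N⌋₊ := by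
    refine Nat.le_floor ((card_le_of_separated_sphere hδ s hs h).trans ?_)
    exact pow_le_pow_right₀ (by rw [le_div_iff₀ hδ]; linarith)
      (Module.finrank_le_of_rank_le hN)
  by_contra! hcon
  -- If no separated set is a net, separated sets can be enlarged indefinitely.
  have key (n : ℕ) : ∃ s : Finset E, s.card = n ∧ (∀ c ∈ s, ‖c‖ = 1) ∧
      ∀ c ∈ s, ∀ d ∈ s, c ≠ d → δ ≤ ‖c - d‖ := by
    induction n with
    | zero => exact ⟨∅, by simp⟩
    | succ n ih =>
      obtain ⟨s, hsn, hs, h⟩ := ih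
      obtain ⟨y, hy, hys⟩ := hcon s (hcard s hs h) hs
      have hmem : y ∉ s := fun hmem => by
        have := hys y hmem
        rw [sub_self, norm_zero] at this
        linarith
      refine ⟨insert y s, by rw [Finset.card_insert_of_notMem hmem, hsn], ?_, ?_⟩
      · simpa [hy] using hs
      · intro c hc d hd hcd
        rcases Finset.mem_insert.1 hc with rfl | hc' <;>
          rcases Finset.mem_insert.1 hd with rfl | hd'
        · exact absurd rfl hcd
        · exact hys d hd'
        · rw [norm_sub_rev]; exact hys c hc'
        · exact h c hc' d hd' hcd
  obtain ⟨s, hsn, hs, h⟩ := key (⌊((2 + δ) / δ) ^ N⌋₊ + 1)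
  have := hcard s hs h
  omega

theorem stmt_10 (N : ℕ) (ε : ℝ) (hε0 : 0 < ε) (hε1 : ε < 1) :
    ∃ N' : ℕ,
      ∀ (X : Type) [inst1 : NormedAddCommGroup X] [inst2 : NormedSpace ℝ X]
        (Y : Submodule ℝ (X →L[ℝ] ℝ)), Module.rank ℝ Y ≤ (N : Cardinal) →
        ∃ Z : Submodule ℝ X, Module.rank ℝ Z ≤ (N' : Cardinal) ∧
          ∀ y ∈ Y, (1 - ε) * ‖y‖ ≤ ‖y.comp Z.subtypeL‖ ∧ ‖y.comp Z.subtypeL‖ ≤ ‖y‖ := by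
  classical
  refine ⟨⌊((2 + ε / 2) / (ε / 2)) ^ N⌋₊, fun X _ _ Y hY => ?_⟩
  obtain ⟨s, hcard, hs, hnet⟩ := exists_sphere_net (E := Y) (half_pos hε0) hY
  have hx (f : Y) : ∃ x : X, ‖x‖ < 1 ∧ (‖f‖ = 1 → 1 - ε / 2 < ‖(f : X →L[ℝ] ℝ) x‖) := by
    by_cases hf : ‖f‖ = 1
    · obtain ⟨x, hx1, hx2⟩ := (f : X →L[ℝ] ℝ).exists_lt_apply_of_lt_opNorm
        (r := 1 - ε / 2) (by rw [← Submodule.coe_norm, hf]; linarith)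
      exact ⟨x, hx1, fun _ => hx2⟩
    · exact ⟨0, by simp, fun h => absurd h hf⟩
  choose x hx1 hx2 using hx
  refine ⟨Submodule.span ℝ (s.image x : Finset X), ?_, ?_⟩
  · refine (rank_span_finset_le _).trans ?_
    exact_mod_cast Finset.card_image_le.trans hcard
  set Z := Submodule.span ℝ ((s.image x : Finset X) : Set X) with hZ
  have unit (u : X →L[ℝ] ℝ) (hu : u ∈ Y) (hu1 : ‖u‖ = 1) : 1 - ε ≤ ‖u.comp Z.subtypeL‖ := by
    obtain ⟨f, hf, huf⟩ := hnet ⟨u, hu⟩ hu1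
    have hxZ : x f ∈ Z := Submodule.subset_span (by
      rw [Finset.coe_image]; exact Set.mem_image_of_mem x hf)
    have h1 : ‖u (x f)‖ ≤ ‖u.comp Z.subtypeL‖ :=
      (u.comp Z.subtypeL).unit_le_opNorm ⟨x f, hxZ⟩ (hx1 f).le
    have h2 : ‖(u - f) (x f)‖ ≤ ‖u - f‖ := (u - f).unit_le_opNorm (x f) (hx1 f).le
    have h3 : ‖(f : X →L[ℝ] ℝ) (x f)‖ ≤ ‖u (x f)‖ + ‖(u - f) (x f)‖ := by
      have := norm_sub_le (u (x f)) ((u - f) (x f))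
      simpa using this
    have h4 : ‖u - f‖ < ε / 2 := huf
    linarith [hx2 f (hs f hf)]
  intro y hy
  constructor
  · rcases eq_or_ne y 0 with rfl | hy0
    · rw [norm_zero, mul_zero]
      exact norm_nonneg ((0 : X →L[ℝ] ℝ).comp Z.subtypeL)
    · have hpos : 0 < ‖y‖ := norm_pos_iff.2 hy0
      have hu : ‖‖y‖⁻¹ • y‖ = 1 := by
        rw [norm_smul, norm_inv, norm_norm, inv_mul_cancel₀ hpos.ne']
      have h := unit (‖y‖⁻¹ • y) (Y.smul_mem _ hy) hu
      have hle : ‖(‖y‖⁻¹ • y).comp Z.subtypeL‖ ≤ ‖y‖⁻¹ * ‖y.comp Z.subtypeL‖ := by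
        refine ContinuousLinearMap.opNorm_le_bound _ (by positivity) fun z => ?_
        have hz : ‖y z‖ ≤ ‖y.comp Z.subtypeL‖ * ‖z‖ := (y.comp Z.subtypeL).le_opNorm z
        calc ‖‖y‖⁻¹ * y z‖ = ‖y‖⁻¹ * ‖y z‖ := by rw [norm_mul, norm_inv, norm_norm]
          _ ≤ ‖y‖⁻¹ * (‖y.comp Z.subtypeL‖ * ‖z‖) := by gcongr
          _ = _ := (mul_assoc _ _ _).symm
      have h' := h.trans hle
      rwa [inv_mul_eq_div, le_div_iff₀ hpos] at h'
  · refine ContinuousLinearMap.opNorm_le_bound _ (norm_nonneg y) fun z => ?_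
    exact y.le_opNorm z
end

section
/- For every N ∈ ℕ and every ε > 0 there exist N' ∈ ℕ and ε' > 0 with the following property. Let (W_j)_{j∈J} be a family of real Banach spaces and let X be a real Banach space such that every linear subspace Z ⊆ X with dim Z ≤ N' admits some j ∈ J and a linear map u : Z → W_j with (1−ε')·‖z‖ ≤ ‖u z‖ ≤ ‖z‖ for all z ∈ Z. Then every linear subspace Y of the continuous dual X* with dim Y ≤ N admits some j ∈ J, a closed linear subspace K of the continuous dual (W_j)*, and a linear map v : Y → (W_j)*/K such that (1+ε)^{-1}·‖y‖ ≤ ‖v y‖ ≤ ‖y‖ for all y ∈ Y; that is, Y is (1+ε)-isomorphic to a subspace of a quotient of the dual of some W_j. -/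
/-!
The point is that a finite-dimensional `Y ⊆ X*` is almost normed by a subspace `Z ⊆ X` whose
dimension is bounded in terms of `dim Y` and the accuracy alone: take a finite `η`-net of the unit
ball of `Y`, of size depending only on `N` and `η` (`exists_net`), choose for each point of the net a
vector of the unit ball of `X` almost attaining its norm, and let `Z` be the span
(`exists_norming_subspace`).

Given an almost isometric `u : Z → W` with `(1 - δ)‖z‖ ≤ ‖u z‖ ≤ ‖z‖`, let `K ⊆ W*` be the
annihilator of `u Z`. For `y ∈ Y`, the functional `(1 - δ) • y|_Z ∘ u⁻¹` on `u Z` has norm at most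
`‖y‖`; by Hahn–Banach it extends to `W` with the same norm. The extension is unique modulo `K`, so its
class `v y` is linear in `y`. Any representative `f` of `v y` satisfies
`(1 - δ)|y z| = |f (u z)| ≤ ‖f‖‖z‖`, and as `Z` almost norms `Y` this bounds `‖v y‖` from below.
-/

/-- A maximal separated set gives a `1/2`-net of the unit ball with at most `5 ^ N` points. -/
lemma exists_half_net (N : ℕ) (E : Type*) [NormedAddCommGroup E] [NormedSpace ℝ E]
    [FiniteDimensional ℝ E] (hN : Module.finrank ℝ E ≤ N) :
    ∃ S : Finset E, S.card ≤ 5 ^ N ∧ ∀ y : E, ‖y‖ ≤ 1 → ∃ t ∈ S, ‖y - t‖ ≤ 1 / 2 := by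
  classical
  set A : Set ℕ := {n | ∃ s : Finset E, s.card = n ∧ (∀ c ∈ s, ‖c‖ ≤ 2) ∧
    ∀ c ∈ s, ∀ d ∈ s, c ≠ d → 1 ≤ ‖c - d‖} with hA
  have hbound : ∀ n ∈ A, n ≤ 5 ^ Module.finrank ℝ E := by
    rintro n ⟨s, rfl, h1, h2⟩
    exact Besicovitch.card_le_of_separated s h1 h2
  have hbdd : BddAbove A := ⟨_, hbound⟩
  have hmem : sSup A ∈ A := Nat.sSup_mem ⟨0, ∅, by simp⟩ hbdd
  obtain ⟨s, hs, h1, h2⟩ := id hmem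
  refine ⟨s.image (fun c => (1 / 2 : ℝ) • c), ?_, fun y hy => ?_⟩
  · calc _ ≤ s.card := Finset.card_image_le
      _ ≤ 5 ^ Module.finrank ℝ E := by rw [hs]; exact hbound _ hmem
      _ ≤ 5 ^ N := Nat.pow_le_pow_right (by norm_num) hN
  · have key : ∃ c ∈ s, ‖(2 : ℝ) • y - c‖ ≤ 1 := by
      by_contra! hcon
      have hnot : (2 : ℝ) • y ∉ s := fun h => by
        have := hcon _ h
        simp at this
        linarith
      have hins : (insert ((2 : ℝ) • y) s).card ∈ A := by
        refine ⟨_, rfl, ?_, ?_⟩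
        · intro c hc
          rcases Finset.mem_insert.1 hc with rfl | hc
          · rw [norm_smul, Real.norm_ofNat]
            linarith
          · exact h1 c hc
        · intro c hc d hd hcd
          rcases Finset.mem_insert.1 hc with rfl | hc
          · rcases Finset.mem_insert.1 hd with rfl | hd
            · exact absurd rfl hcd
            · exact (hcon d hd).le
          · rcases Finset.mem_insert.1 hd with rfl | hd
            · rw [norm_sub_rev]
              exact (hcon c hc).le
            · exact h2 c hc d hd hcd
      have := le_csSup hbdd hins
      rw [Finset.card_insert_of_notMem hnot] at this
      omega
    obtain ⟨c, hc, hyc⟩ := key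
    refine ⟨(1 / 2 : ℝ) • c, Finset.mem_image_of_mem _ hc, ?_⟩
    have : y - (1 / 2 : ℝ) • c = (1 / 2 : ℝ) • ((2 : ℝ) • y - c) := by
      rw [smul_sub, smul_smul]
      norm_num
    rw [this, norm_smul, Real.norm_of_nonneg (by norm_num)]
    linarith

/-- Refining a `1/2`-net `k` times gives a `2⁻ᵏ`-net of the unit ball, with cardinality bounded
in terms of `k` and the dimension only. -/
lemma exists_net (N : ℕ) (E : Type*) [NormedAddCommGroup E] [NormedSpace ℝ E]
    [FiniteDimensional ℝ E] (hN : Module.finrank ℝ E ≤ N) (k : ℕ) :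
    ∃ T : Finset E, T.card ≤ (5 ^ N) ^ k ∧
      ∀ y : E, ‖y‖ ≤ 1 → ∃ t ∈ T, ‖y - t‖ ≤ (1 / 2 : ℝ) ^ k := by
  classical
  obtain ⟨S, hS, hnet⟩ := exists_half_net N E hN
  induction k with
  | zero => exact ⟨{0}, by simp, fun y hy => ⟨0, by simp, by simpa using hy⟩⟩
  | succ k ih =>
    obtain ⟨T, hT, hTnet⟩ := ih
    refine ⟨(T ×ˢ S).image (fun p => p.1 + (1 / 2 : ℝ) ^ k • p.2), ?_, fun y hy => ?_⟩
    · calc _ ≤ (T ×ˢ S).card := Finset.card_image_le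
        _ = T.card * S.card := Finset.card_product _ _
        _ ≤ _ := by rw [pow_succ]; exact Nat.mul_le_mul hT hS
    · obtain ⟨t, ht, hyt⟩ := hTnet y hy
      -- the rescaled error `2ᵏ (y - t)` lies in the unit ball, hence is close to a point of `S`
      have hpos : (0 : ℝ) < (1 / 2 : ℝ) ^ k := by positivity
      obtain ⟨s, hs, hys⟩ := hnet (((1 / 2 : ℝ) ^ k)⁻¹ • (y - t)) (by
        rw [norm_smul, norm_inv, Real.norm_of_nonneg hpos.le, inv_mul_le_iff₀ hpos]
        simpa using hyt)
      refine ⟨t + (1 / 2 : ℝ) ^ k • s,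
        Finset.mem_image.2 ⟨(t, s), Finset.mem_product.2 ⟨ht, hs⟩, rfl⟩, ?_⟩
      have : y - (t + (1 / 2 : ℝ) ^ k • s) =
          (1 / 2 : ℝ) ^ k • (((1 / 2 : ℝ) ^ k)⁻¹ • (y - t) - s) := by
        rw [smul_sub, smul_inv_smul₀ hpos.ne']
        abel
      rw [this, norm_smul, Real.norm_of_nonneg hpos.le, pow_succ]
      exact mul_le_mul_of_nonneg_left hys hpos.le

lemma exists_net_submodule (N k : ℕ) {E : Type*} [NormedAddCommGroup E] [NormedSpace ℝ E]
    (Y : Submodule ℝ E) (hY : Module.rank ℝ Y ≤ (N : Cardinal)) :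
    ∃ T : Finset E, T.card ≤ (5 ^ N) ^ k ∧
      ∀ y ∈ Y, ‖y‖ ≤ 1 → ∃ t ∈ T, ‖y - t‖ ≤ (1 / 2 : ℝ) ^ k := by
  classical
  have : FiniteDimensional ℝ Y :=
    Module.rank_lt_aleph0_iff.1 (hY.trans_lt (Cardinal.natCast_lt_aleph0))
  obtain ⟨T, hT, hnet⟩ := exists_net N Y (Module.finrank_le_of_rank_le hY) k
  refine ⟨T.image Subtype.val, Finset.card_image_le.trans hT, fun y hy hy1 => ?_⟩
  obtain ⟨t, ht, hyt⟩ := hnet ⟨y, hy⟩ hy1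
  exact ⟨t, Finset.mem_image_of_mem _ ht, hyt⟩

/-- A finite-dimensional space of functionals is almost normed by a subspace of `X` of dimension
bounded independently of `X` and `Y`. -/
lemma exists_norming_subspace (N k : ℕ) {X : Type*} [NormedAddCommGroup X] [NormedSpace ℝ X]
    (Y : Submodule ℝ (X →L[ℝ] ℝ)) (hY : Module.rank ℝ Y ≤ (N : Cardinal)) :
    ∃ Z : Submodule ℝ X, Module.rank ℝ Z ≤ (((5 ^ N) ^ k : ℕ) : Cardinal) ∧
      ∀ y ∈ Y, ∃ z ∈ Z, ‖z‖ ≤ 1 ∧ (1 - 3 * (1 / 2 : ℝ) ^ k) * ‖y‖ ≤ |y z| := by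
  classical
  obtain ⟨T, hT, hnet⟩ := exists_net_submodule N k Y hY
  set η : ℝ := (1 / 2 : ℝ) ^ k with hη
  have hpos : 0 < η := by positivity
  have hx : ∀ f : X →L[ℝ] ℝ, ∃ x : X, ‖x‖ ≤ 1 ∧ ‖f‖ - η ≤ |f x| := by
    intro f
    by_contra! hcon
    have hle : ‖f‖ ≤ max (‖f‖ - η) 0 := by
      refine f.opNorm_le_of_unit_norm (le_max_right _ _) fun x hx => ?_
      exact (hcon x hx.le).le.trans (le_max_left _ _)
    have h0 := hcon 0 (by simp)
    simp only [map_zero, abs_zero] at h0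
    rw [max_eq_left h0.le] at hle
    linarith
  choose x hx1 hx2 using hx
  refine ⟨Submodule.span ℝ ((T.image x : Finset X) : Set X), ?_, fun y hy => ?_⟩
  · refine (rank_span_finset_le _).trans ?_
    exact_mod_cast Finset.card_image_le.trans hT
  · rcases eq_or_ne y 0 with rfl | hy0
    · exact ⟨0, Submodule.zero_mem _, by simp, by simp⟩
    have hyn : 0 < ‖y‖ := norm_pos_iff.2 hy0
    have hyu : ‖‖y‖⁻¹ • y‖ = 1 := by
      rw [norm_smul, norm_inv, norm_norm, inv_mul_cancel₀ hyn.ne']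
    obtain ⟨t, ht, hyt⟩ := hnet (‖y‖⁻¹ • y) (Y.smul_mem _ hy) hyu.le
    refine ⟨x t, Submodule.subset_span (Finset.mem_coe.2 (Finset.mem_image_of_mem _ ht)),
      hx1 _, ?_⟩
    have h1 := hx2 t
    have h2 : 1 - η ≤ ‖t‖ := by
      have := norm_le_norm_sub_add (‖y‖⁻¹ • y) t
      linarith
    have h3 : |‖y‖⁻¹ * y (x t) - t (x t)| ≤ η := by
      have := (‖y‖⁻¹ • y - t).le_opNorm (x t)
      refine (this.trans ?_)
      calc _ ≤ η * 1 := mul_le_mul hyt (hx1 _) (norm_nonneg _) hpos.le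
        _ = η := mul_one _
    have h4 : 1 - 3 * η ≤ |‖y‖⁻¹ * y (x t)| := by
      have := abs_sub_abs_le_abs_sub (t (x t)) (‖y‖⁻¹ * y (x t))
      rw [abs_sub_comm] at this
      linarith
    rwa [abs_mul, abs_inv, abs_norm, ← div_eq_inv_mul, le_div_iff₀ hyn] at h4

theorem stmt_11 (N : ℕ) (ε : ℝ) (hε : 0 < ε) :
    ∃ (N' : ℕ) (ε' : ℝ), 0 < ε' ∧
      ∀ (J : Type) (W : J → Type)
        [instW : ∀ j, NormedAddCommGroup (W j)] [instW2 : ∀ j, NormedSpace ℝ (W j)]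
        [instW3 : ∀ j, CompleteSpace (W j)]
        (X : Type) [instX : NormedAddCommGroup X] [instX2 : NormedSpace ℝ X]
        [instX3 : CompleteSpace X],
        (∀ Z : Submodule ℝ X, Module.rank ℝ Z ≤ (N' : Cardinal) →
          ∃ (j : J) (u : Z →ₗ[ℝ] W j), ∀ z : Z,
            (1 - ε') * ‖z‖ ≤ ‖u z‖ ∧ ‖u z‖ ≤ ‖z‖) →
        ∀ Y : Submodule ℝ (X →L[ℝ] ℝ), Module.rank ℝ Y ≤ (N : Cardinal) →
          ∃ (j : J) (K : Submodule ℝ (W j →L[ℝ] ℝ)), IsClosed (K : Set (W j →L[ℝ] ℝ)) ∧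
            ∃ v : Y →ₗ[ℝ] ((W j →L[ℝ] ℝ) ⧸ K), ∀ y : Y,
              (1 + ε)⁻¹ * ‖y‖ ≤ ‖v y‖ ∧ ‖v y‖ ≤ ‖y‖ := by
  -- with `s = 1 - (1 + ε)⁻¹`, both losses are at most `s / 2`, and `(1 - s / 2)² ≥ 1 - s`
  obtain ⟨s, hs⟩ : ∃ s : ℝ, s = 1 - (1 + ε)⁻¹ := ⟨_, rfl⟩
  have hs0 : 0 < s := by
    have : (1 + ε)⁻¹ < 1 := inv_lt_one_of_one_lt₀ (by linarith)
    linarith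
  have hs1 : s < 1 := by
    have : 0 < (1 + ε)⁻¹ := by positivity
    linarith
  have hr : (1 + ε)⁻¹ = 1 - s := by linarith
  obtain ⟨k, hk⟩ := exists_pow_lt_of_lt_one (show 0 < s / 6 by linarith)
    (show (1 / 2 : ℝ) < 1 by norm_num)
  refine ⟨(5 ^ N) ^ k, s / 2, by linarith, ?_⟩
  intro J W _ _ _ X _ _ _ H Y hY
  obtain ⟨Z, hZ, hnorm⟩ := exists_norming_subspace N k Y hY
  obtain ⟨j, u, hu⟩ := H Z hZ
  have hc : 0 < 1 - s / 2 := by linarith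
  have huinj : Function.Injective u := by
    rw [injective_iff_map_eq_zero]
    intro z hz
    have := (hu z).1
    rw [hz, norm_zero] at this
    exact norm_le_zero_iff.1 (nonpos_of_mul_nonpos_right this hc)
  -- the Hahn–Banach extensions of `(1 - s / 2) • y ∘ u⁻¹`
  have hF : ∀ y : Y, ∃ f : W j →L[ℝ] ℝ,
      (∀ z : Z, f (u z) = (1 - s / 2) * (y : X →L[ℝ] ℝ) z) ∧ ‖f‖ ≤ ‖y‖ := by
    intro y
    let e := LinearEquiv.ofInjective u huinj
    let g : LinearMap.range u →ₗ[ℝ] ℝ :=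
      (1 - s / 2) • ((y : X →L[ℝ] ℝ).toLinearMap ∘ₗ Z.subtype ∘ₗ e.symm.toLinearMap)
    have hg : ∀ z : Z, g (e z) = (1 - s / 2) * (y : X →L[ℝ] ℝ) z := by
      intro z
      simp [g]
    have hgb : ∀ w, ‖g w‖ ≤ ‖y‖ * ‖w‖ := by
      intro w
      obtain ⟨z, rfl⟩ := e.surjective w
      rw [hg, norm_mul, Real.norm_of_nonneg hc.le]
      have h1 : ‖(y : X →L[ℝ] ℝ) z‖ ≤ ‖y‖ * ‖z‖ := (y : X →L[ℝ] ℝ).le_opNorm z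
      have h2 : (1 - s / 2) * ‖z‖ ≤ ‖e z‖ := (hu z).1
      calc _ ≤ (1 - s / 2) * (‖y‖ * ‖z‖) := mul_le_mul_of_nonneg_left h1 hc.le
        _ = ‖y‖ * ((1 - s / 2) * ‖z‖) := by ring
        _ ≤ _ := mul_le_mul_of_nonneg_left h2 (norm_nonneg y)
    obtain ⟨f, hf1, hf2⟩ := exists_extension_norm_eq _ (g.mkContinuous ‖y‖ hgb)
    refine ⟨f, fun z => ?_, ?_⟩
    · rw [← hg]
      exact hf1 (e z)
    · rw [hf2]
      exact g.mkContinuous_norm_le (norm_nonneg y) hgb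
  choose F hF1 hF2 using hF
  let K : Submodule ℝ (W j →L[ℝ] ℝ) :=
    { carrier := {f | ∀ z : Z, f (u z) = 0}
      add_mem' := fun {f g} hf hg z => by
        rw [add_apply, hf z, hg z, add_zero]
      zero_mem' := fun z => rfl
      smul_mem' := fun c f hf z => by
        rw [smul_apply, hf z, smul_zero] }
  have hK : ∀ f, f ∈ K ↔ ∀ z : Z, f (u z) = 0 := fun f => Iff.rfl
  have hKc : IsClosed (K : Set (W j →L[ℝ] ℝ)) := by
    have : (K : Set (W j →L[ℝ] ℝ)) = ⋂ z : Z, {f | f (u z) = 0} := by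
      ext f
      simp [hK]
    rw [this]
    exact isClosed_iInter fun z => isClosed_eq (by fun_prop) continuous_const
  let v : Y →ₗ[ℝ] ((W j →L[ℝ] ℝ) ⧸ K) :=
    { toFun := fun y => Submodule.Quotient.mk (F y)
      map_add' := fun a b => by
        rw [← Submodule.Quotient.mk_add, Submodule.Quotient.eq, hK]
        intro z
        simp [hF1]
        ring
      map_smul' := fun c a => by
        rw [RingHom.id_apply, ← Submodule.Quotient.mk_smul, Submodule.Quotient.eq, hK]
        intro z
        simp [hF1]
        ring }
  refine ⟨j, K, hKc, v, fun y => ⟨?_, (Submodule.Quotient.norm_mk_le K (F y)).trans (hF2 y)⟩⟩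
  refine le_of_forall_pos_le_add fun δ hδ => ?_
  obtain ⟨f, hf, hfn⟩ := Submodule.Quotient.norm_mk_lt (v y) hδ
  refine le_trans ?_ hfn.le
  have hfz : ∀ z : Z, f (u z) = (1 - s / 2) * (y : X →L[ℝ] ℝ) z := by
    intro z
    have : f - F y ∈ K := (Submodule.Quotient.eq K).1 hf
    rw [← hF1, ← sub_eq_zero]
    exact this z
  obtain ⟨z, hz, hz1, hyz⟩ := hnorm y y.2
  have h1 : (1 - s / 2) * |(y : X →L[ℝ] ℝ) z| ≤ ‖f‖ := by
    have h := f.le_opNorm (u ⟨z, hz⟩)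
    rw [hfz, norm_mul, Real.norm_of_nonneg hc.le, Real.norm_eq_abs] at h
    have h' : ‖u ⟨z, hz⟩‖ ≤ 1 := (hu ⟨z, hz⟩).2.trans hz1
    exact h.trans (mul_le_of_le_one_right (norm_nonneg _) h')
  have h2 : (1 - s / 2) * ‖y‖ ≤ |(y : X →L[ℝ] ℝ) z| :=
    le_trans (mul_le_mul_of_nonneg_right (by linarith) (norm_nonneg y)) hyz
  calc (1 + ε)⁻¹ * ‖y‖ ≤ ((1 - s / 2) * (1 - s / 2)) * ‖y‖ := by
        rw [hr]
        exact mul_le_mul_of_nonneg_right (by nlinarith [sq_nonneg s]) (norm_nonneg y)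
    _ = (1 - s / 2) * ((1 - s / 2) * ‖y‖) := by ring
    _ ≤ (1 - s / 2) * |(y : X →L[ℝ] ℝ) z| := mul_le_mul_of_nonneg_left h2 hc.le
    _ ≤ ‖f‖ := h1
end

section
/- Let G be a group, S ⊆ G a nonempty finite symmetric subset (s ∈ S if and only if s⁻¹ ∈ S), and π a unitary representation of G on a complex Hilbert space H (a group homomorphism from G to the unitary operators on H). Define the bounded operators Δ := Id − (1/|S|)·Σ_{s∈S} π(s) and m := Id − Δ/2 = (1/2)·Id + (1/(2|S|))·Σ_{s∈S} π(s) on H. Then for every ε ∈ (0,2]: the spectrum of Δ is contained in {0} ∪ [ε, 2] if and only if for every x ∈ H, Σ_{s∈S} ‖π(s)(m x) − m x‖² ≤ (1 − ε/2)²·Σ_{s∈S} ‖π(s)x − x‖². -/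
/-!
For a unitary representation and symmetric `S`, the Dirichlet form of `Δ` is
`∑_{s ∈ S} ‖π s y - y‖² = 2 |S| re ⟪Δ y, y⟫` (`sum_norm_sq_eq`). As `m = 1 - Δ/2` is self-adjoint,
the energy inequality says exactly that the operator `(1 - ε/2)² Δ - m Δ m` is nonnegative.
This operator is `f(Δ)` for `f t = (1 - ε/2)² t - t (1 - t/2)²`, so by the continuous functional
calculus it is nonnegative if and only if `f ≥ 0` on the spectrum of `Δ`. That spectrum lies in
`[0, 2]`, where `f t ≥ 0` means `t = 0` or `1 - t/2 ≤ 1 - ε/2`, i.e. `t = 0` or `ε ≤ t`.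
-/

open ContinuousLinearMap

section

variable {G : Type*} [Group G] {H : Type*} [NormedAddCommGroup H] [InnerProductSpace ℂ H]
  [CompleteSpace H]

/-- The Laplacian `Δ = 1 - |S|⁻¹ ∑_{s ∈ S} π s`. -/
noncomputable def lap (S : Finset G) (π : G →* (H →L[ℂ] H)) : H →L[ℂ] H :=
  ContinuousLinearMap.id ℂ H - (S.card : ℂ)⁻¹ • ∑ s ∈ S, π s

/-- A representation by isometries is unitary, since `π g⁻¹` inverts `π g`. -/
lemma adjoint_rep (π : G →* (H →L[ℂ] H)) (hunit : ∀ (g : G) (x : H), ‖π g x‖ = ‖x‖) (g : G) :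
    star (π g) = π g⁻¹ := by
  have h1 : star (π g) * π g = 1 := by
    rw [ContinuousLinearMap.star_eq_adjoint]
    exact (ContinuousLinearMap.norm_map_iff_adjoint_comp_self (π g)).mp (hunit g)
  have h2 : π g * π g⁻¹ = 1 := by rw [← map_mul]; simp
  calc star (π g) = star (π g) * (π g * π g⁻¹) := by rw [h2, mul_one]
    _ = π g⁻¹ := by rw [← mul_assoc, h1, one_mul]

lemma lap_isSelfAdjoint (S : Finset G) (hSsymm : ∀ s ∈ S, s⁻¹ ∈ S)
    (π : G →* (H →L[ℂ] H)) (hunit : ∀ (g : G) (x : H), ‖π g x‖ = ‖x‖) :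
    IsSelfAdjoint (lap S π) := by
  have hsum : IsSelfAdjoint (∑ s ∈ S, π s) := by
    rw [IsSelfAdjoint, star_sum]
    simp_rw [adjoint_rep π hunit]
    exact Finset.sum_nbij' (fun s => s⁻¹) (fun s => s⁻¹) hSsymm hSsymm (by simp) (by simp)
      (by simp)
  have hc : IsSelfAdjoint ((S.card : ℂ)⁻¹) := by simp [IsSelfAdjoint]
  exact (IsSelfAdjoint.one (H →L[ℂ] H)).sub (hc.smul hsum)

/-- The Dirichlet form of the Laplacian. -/
lemma sum_norm_sq_eq (S : Finset G) (hSne : S.Nonempty)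
    (π : G →* (H →L[ℂ] H)) (hunit : ∀ (g : G) (x : H), ‖π g x‖ = ‖x‖) (y : H) :
    ∑ s ∈ S, ‖π s y - y‖ ^ 2 = 2 * S.card * (lap S π).reApplyInnerSelf y := by
  have hn : (S.card : ℝ) ≠ 0 := by exact_mod_cast hSne.card_pos.ne'
  have h1 : ∀ s ∈ S, ‖π s y - y‖ ^ 2 = 2 * ‖y‖ ^ 2 - 2 * (inner ℂ (π s y) y).re := by
    intro s _
    have := @norm_sub_sq ℂ _ _ _ _ (π s y) y
    rw [this, hunit]
    simp only [RCLike.re_to_complex]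
    ring
  rw [Finset.sum_congr rfl h1, Finset.sum_sub_distrib, Finset.sum_const, ← Finset.mul_sum,
    nsmul_eq_mul]
  have h2 : (lap S π).reApplyInnerSelf y
      = ‖y‖ ^ 2 - (S.card : ℝ)⁻¹ * ∑ s ∈ S, (inner ℂ (π s y) y).re := by
    have hc : (starRingEnd ℂ) ((S.card : ℂ)⁻¹) = (((S.card : ℝ)⁻¹ : ℝ) : ℂ) := by simp
    rw [ContinuousLinearMap.reApplyInnerSelf_apply, lap]
    simp only [_root_.sub_apply, _root_.smul_apply,
      _root_.sum_apply, ContinuousLinearMap.id_apply, inner_sub_left,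
      inner_smul_left, sum_inner, map_sub, RCLike.re_to_complex, hc, Complex.re_ofReal_mul,
      Complex.re_sum]
    rw [← RCLike.re_to_complex, inner_self_eq_norm_sq]
  rw [h2]
  field_simp

lemma norm_lap_le (S : Finset G) (hSne : S.Nonempty)
    (π : G →* (H →L[ℂ] H)) (hunit : ∀ (g : G) (x : H), ‖π g x‖ = ‖x‖) : ‖lap S π‖ ≤ 2 := by
  have hn : (S.card : ℝ) ≠ 0 := by exact_mod_cast hSne.card_pos.ne'
  refine ContinuousLinearMap.opNorm_le_bound _ (by norm_num) fun x => ?_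
  have h1 : ‖∑ s ∈ S, π s x‖ ≤ S.card * ‖x‖ := by
    refine (norm_sum_le _ _).trans ?_
    simp [hunit]
  calc ‖lap S π x‖ = ‖x - (S.card : ℂ)⁻¹ • ∑ s ∈ S, π s x‖ := by
        simp [lap]
    _ ≤ ‖x‖ + ‖(S.card : ℂ)⁻¹ • ∑ s ∈ S, π s x‖ := norm_sub_le _ _
    _ = ‖x‖ + (S.card : ℝ)⁻¹ * ‖∑ s ∈ S, π s x‖ := by simp [norm_smul]
    _ ≤ ‖x‖ + (S.card : ℝ)⁻¹ * (S.card * ‖x‖) := by gcongr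
    _ = 2 * ‖x‖ := by field_simp; ring

lemma lap_nonneg (S : Finset G) (hSne : S.Nonempty) (hSsymm : ∀ s ∈ S, s⁻¹ ∈ S)
    (π : G →* (H →L[ℂ] H)) (hunit : ∀ (g : G) (x : H), ‖π g x‖ = ‖x‖) : 0 ≤ lap S π := by
  rw [ContinuousLinearMap.nonneg_iff_isPositive, ContinuousLinearMap.isPositive_def']
  refine ⟨lap_isSelfAdjoint S hSsymm π hunit, fun x => ?_⟩
  have hn : (0 : ℝ) < S.card := by exact_mod_cast hSne.card_pos
  have h := sum_norm_sq_eq S hSne π hunit x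
  have h0 : 0 ≤ ∑ s ∈ S, ‖π s x - x‖ ^ 2 := by positivity
  rw [h] at h0
  exact nonneg_of_mul_nonneg_right h0 (by positivity)

/-- For a self-adjoint operator `D`, with `m = 1 - D/2`, the operator `c D - m D m` is nonnegative
if and only if the corresponding polynomial is nonnegative on the spectrum of `D`. -/
lemma energy_nonneg_iff (D : H →L[ℂ] H) (hD : IsSelfAdjoint D) (c : ℝ) :
    0 ≤ c • D - (1 - (1 / 2 : ℝ) • D) * D * (1 - (1 / 2 : ℝ) • D) ↔
      ∀ t ∈ spectrum ℝ D, 0 ≤ c * t - (1 - 1 / 2 * t) * t * (1 - 1 / 2 * t) := by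
  rw [← cfc_nonneg_iff (fun t : ℝ => c * t - (1 - 1 / 2 * t) * t * (1 - 1 / 2 * t)) D]
  have hm : cfc (fun t : ℝ => 1 - 1 / 2 * t) D = 1 - (1 / 2 : ℝ) • D := by
    rw [cfc_sub (fun _ : ℝ => (1 : ℝ)) (fun t : ℝ => 1 / 2 * t) D, cfc_const_one ℝ D,
      cfc_const_mul_id (1 / 2 : ℝ) D]
  rw [cfc_sub (fun t : ℝ => c * t) (fun t : ℝ => (1 - 1 / 2 * t) * t * (1 - 1 / 2 * t)) D,
    cfc_mul (fun t : ℝ => (1 - 1 / 2 * t) * t) (fun t : ℝ => 1 - 1 / 2 * t) D,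
    cfc_mul (fun t : ℝ => 1 - 1 / 2 * t) (fun t : ℝ => t) D, hm, cfc_const_mul_id c D,
    cfc_id' ℝ D]

end

theorem stmt_12 {G : Type*} [Group G] (S : Finset G) (hSne : S.Nonempty)
    (hSsymm : ∀ s ∈ S, s⁻¹ ∈ S)
    {H : Type*} [NormedAddCommGroup H] [InnerProductSpace ℂ H] [CompleteSpace H]
    (π : G →* (H →L[ℂ] H)) (hunit : ∀ (g : G) (x : H), ‖π g x‖ = ‖x‖)
    (ε : ℝ) (hε0 : 0 < ε) (hε2 : ε ≤ 2) :
    (spectrum ℂ (ContinuousLinearMap.id ℂ H - (S.card : ℂ)⁻¹ • ∑ s ∈ S, π s) ⊆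
        {0} ∪ ((fun t : ℝ => (t : ℂ)) '' Set.Icc ε 2)) ↔
      ∀ x : H,
        (∑ s ∈ S, ‖π s (((1 / 2 : ℂ) • ContinuousLinearMap.id ℂ H
              + (2 * (S.card : ℂ))⁻¹ • ∑ t ∈ S, π t) x)
            - ((1 / 2 : ℂ) • ContinuousLinearMap.id ℂ H
              + (2 * (S.card : ℂ))⁻¹ • ∑ t ∈ S, π t) x‖ ^ 2)
          ≤ (1 - ε / 2) ^ 2 * ∑ s ∈ S, ‖π s x - x‖ ^ 2 := by
  have hn : (0 : ℝ) < S.card := by exact_mod_cast hSne.card_pos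
  have hm : (1 / 2 : ℂ) • ContinuousLinearMap.id ℂ H + (2 * (S.card : ℂ))⁻¹ • ∑ t ∈ S, π t
      = 1 - (1 / 2 : ℝ) • lap S π := by
    have h1 : (1 / 2 : ℝ) • lap S π = (1 / 2 : ℂ) • lap S π := by
      rw [← Complex.coe_smul]; norm_num
    rw [h1, lap, ← ContinuousLinearMap.one_def, mul_inv]
    module
  rw [hm]
  change spectrum ℂ (lap S π) ⊆ _ ↔ _
  have hD := lap_isSelfAdjoint S hSsymm π hunit
  have hnonneg := lap_nonneg S hSne hSsymm π hunit
  have hnorm := norm_lap_le S hSne π hunit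
  have hdir := sum_norm_sq_eq S hSne π hunit
  set D := lap S π with hDdef
  have hM : IsSelfAdjoint (1 - (1 / 2 : ℝ) • D) :=
    (IsSelfAdjoint.one (H →L[ℂ] H)).sub ((IsSelfAdjoint.all (1 / 2 : ℝ)).smul hD)
  set M := 1 - (1 / 2 : ℝ) • D with hMdef
  have hP : IsSelfAdjoint (((1 - ε / 2) ^ 2 : ℝ) • D - M * D * M) := by
    refine ((IsSelfAdjoint.all _).smul hD).sub ?_
    have := hD.conjugate M
    rwa [hM.star_eq] at this
  have hquad : ∀ x, (((1 - ε / 2) ^ 2 : ℝ) • D - M * D * M).reApplyInnerSelf x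
      = (1 - ε / 2) ^ 2 * D.reApplyInnerSelf x - D.reApplyInnerSelf (M x) := by
    intro x
    have h1 : inner ℂ ((M * D * M) x) x = inner ℂ (D (M x)) (M x) := hM.isSymmetric _ _
    simp only [ContinuousLinearMap.reApplyInnerSelf_apply, _root_.sub_apply,
      _root_.smul_apply, inner_sub_left, h1, map_sub]
    rw [← Complex.coe_smul, inner_smul_left]
    simp only [Complex.conj_ofReal, RCLike.re_to_complex, Complex.re_ofReal_mul]
  have hright : (∀ x : H, (∑ s ∈ S, ‖π s (M x) - M x‖ ^ 2)
      ≤ (1 - ε / 2) ^ 2 * ∑ s ∈ S, ‖π s x - x‖ ^ 2) ↔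
      0 ≤ ((1 - ε / 2) ^ 2 : ℝ) • D - M * D * M := by
    rw [ContinuousLinearMap.nonneg_iff_isPositive, ContinuousLinearMap.isPositive_def',
      and_iff_right hP]
    refine forall_congr' fun x => ?_
    rw [hquad, hdir, hdir, sub_nonneg, mul_left_comm]
    exact mul_le_mul_iff_right₀ (by positivity)
  rw [hright, energy_nonneg_iff D hD]
  have hspec : ∀ t ∈ spectrum ℝ D, 0 ≤ t ∧ t ≤ 2 := by
    intro t ht
    refine ⟨spectrum_nonneg_of_nonneg hnonneg ht, ?_⟩
    have ht' : (t : ℂ) ∈ spectrum ℂ D := (spectrum.algebraMap_mem_iff ℂ).mpr ht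
    -- On the zero space the identity does not have norm one, but there the spectrum is empty.
    rcases subsingleton_or_nontrivial H with hH | hH
    · rw [spectrum.of_subsingleton] at ht'
      exact ht'.elim
    · have h := (spectrum.norm_le_norm_of_mem ht').trans hnorm
      rw [Complex.norm_real] at h
      exact (le_abs_self t).trans h
  constructor
  · intro h t ht
    obtain ⟨h0, h2⟩ := hspec t ht
    have ht' : (t : ℂ) ∈ spectrum ℂ D := (spectrum.algebraMap_mem_iff ℂ).mpr ht
    rcases h ht' with h | ⟨u, hu, hut⟩
    · have : t = 0 := Complex.ofReal_eq_zero.mp h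
      simp [this]
    · have : u = t := Complex.ofReal_injective hut
      subst this
      -- The value is `u ((1 - ε/2)² - (1 - u/2)²)`, factored as a difference of squares.
      have h3 : 0 ≤ u * ((u - ε) * (4 - ε - u)) :=
        mul_nonneg h0 (mul_nonneg (by linarith [hu.1]) (by linarith))
      linarith
  · intro h z hz
    have hzr : z = (z.re : ℂ) := hD.mem_spectrum_eq_re hz
    have hzR : z.re ∈ spectrum ℝ D := by
      rw [hzr] at hz
      exact (spectrum.algebraMap_mem_iff ℂ).mp hz
    obtain ⟨h0, h2⟩ := hspec _ hzR
    have h4 := h _ hzR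
    by_cases hz0 : z.re = 0
    · left
      rw [hzr, hz0]
      simp
    · right
      refine ⟨z.re, ⟨?_, h2⟩, hzr.symm⟩
      have hpos : 0 < z.re := lt_of_le_of_ne h0 (Ne.symm hz0)
      by_contra! hlt
      have h3 : 0 < z.re * ((ε - z.re) * (4 - ε - z.re)) :=
        mul_pos hpos (mul_pos (by linarith) (by linarith))
      linarith
end
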